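/- Let (R, 𝔪, k) be a commutative noetherian local ring and M a finitely generated R-module. (a) If 0 → Y → X → M → 0 is an exact sequence of finitely generated R-modules with pd_R Y < ∞ and X totally reflexive, then AB-dim_R M < ∞ if and only if AB-dim_R X < ∞. (b) If 0 → M → Y' → X' → 0 is an exact sequence of finitely generated R-modules with pd_R Y' < ∞ and X' totally reflexive, then AB-dim_R M < ∞ if and only if AB-dim_R X' < ∞. -/

import Mathlib

/-! In both parts all modules involved have finite G-dimension: in (a), resolve `Y` by projectives
and splice with `X → M`; in (b), pull a projective `P → Y'` back to `M`, and use that kernels of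
surjections from a projective onto a totally reflexive module are totally reflexive
(`IsTotallyReflexive.ker`, `gdimLE_of_partB`). So `AB-dim < ∞` amounts to `P_R < ∞`
(`abdim_lt_top`). As `Ext^n(Y, -) = 0` for `n > pd Y`, the long exact sequence shows that in large
degrees `Ext^n(M, -)` agrees with `Ext^n(X, -)` in (a) and with `Ext^{n+1}(X', -)` in (b), so the
classes `M^⊥` coincide and the uniform bounds correspond (`ExtBounded.of_shift`).

Only degrees `n ≥ 1` matter for finiteness of `P_R`, and there vanishing of the derived functor
`Ext` can be read off from `Abelian.Ext` (`extVanishes_succ_iff`). -/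

open CategoryTheory IsLocalRing

noncomputable section

universe u

variable (R : Type u) [CommRing R]

/-- The Ext group `Ext^n_R(M, N)` vanishes. -/
def ExtVanishes (M : Type u) [AddCommGroup M] [Module R M]
    (N : Type u) [AddCommGroup N] [Module R N] (n : ℕ) : Prop :=
  Subsingleton (((Ext R (ModuleCat.{u} R) n).obj
    (Opposite.op (ModuleCat.of R M))).obj (ModuleCat.of R N))

/-- `N ∈ M^⊥`, i.e. `Ext^n_R(M,N) = 0` for all sufficiently large `n`. -/
def MemPerp (M : Type u) [AddCommGroup M] [Module R M]
    (N : Type u) [AddCommGroup N] [Module R N] : Prop :=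
  ∃ d : ℕ, ∀ n ≥ d, ExtVanishes R M N n

/-- `P_R(M,N) = sup { n | Ext^n_R(M,N) ≠ 0 }`, an element of `{-∞} ∪ ℕ ∪ {∞}`;
it is `⊥ = -∞` when every `Ext^n_R(M,N)` vanishes. -/
def extP (M : Type u) [AddCommGroup M] [Module R M]
    (N : Type u) [AddCommGroup N] [Module R N] : WithBot ℕ∞ :=
  sSup {x : WithBot ℕ∞ | ∃ n : ℕ, ¬ ExtVanishes R M N n ∧ x = (n : ℕ∞)}

/-- `P_R(M) = sup { P_R(M,N) | N ∈ M^⊥ }`, the sup being taken over all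
finitely generated modules in `M^⊥`. -/
def extPsup (M : Type u) [AddCommGroup M] [Module R M] : WithBot ℕ∞ :=
  sSup {x : WithBot ℕ∞ | ∃ (N : Type u) (_ : AddCommGroup N) (_ : Module R N),
    Module.Finite R N ∧ MemPerp R M N ∧ x = extP R M N}

/-- A module `G` is totally reflexive if the biduality map `G → G**` is bijective and
`Ext^n_R(G,R) = 0 = Ext^n_R(G*,R)` for all `n > 0`. -/
def IsTotallyReflexive (G : Type u) [AddCommGroup G] [Module R G] : Prop :=
  Function.Bijective (Module.Dual.eval R G) ∧
    (∀ n > 0, ExtVanishes R G R n) ∧ (∀ n > 0, ExtVanishes R (Module.Dual R G) R n)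

/-- `G-dim_R M ≤ n`: there is a resolution of `M` of length `n` by finitely generated
totally reflexive modules. -/
def GdimLE : ℕ → ModuleCat.{u} R → Prop
  | 0, M => IsTotallyReflexive R M
  | n + 1, M => ∃ G : ModuleCat.{u} R, Module.Finite R G ∧ IsTotallyReflexive R G ∧
      ∃ f : G →ₗ[R] M, Function.Surjective f ∧ GdimLE n (ModuleCat.of R (LinearMap.ker f))

/-- The G-dimension of `M`, as an element of `ℕ∞`. -/
def gdim (M : Type u) [AddCommGroup M] [Module R M] : ℕ∞ :=
  sInf {x : ℕ∞ | ∃ n : ℕ, GdimLE R n (ModuleCat.of R M) ∧ x = n}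

/-- `pd_R M ≤ n`: there is a projective resolution of `M` of length `n` by finitely
generated projective modules. -/
def ProjDimLE : ℕ → ModuleCat.{u} R → Prop
  | 0, M => Module.Projective R M
  | n + 1, M => ∃ P : ModuleCat.{u} R, Module.Finite R P ∧ Module.Projective R P ∧
      ∃ f : P →ₗ[R] M, Function.Surjective f ∧ ProjDimLE n (ModuleCat.of R (LinearMap.ker f))

/-- The projective dimension of `M`, as an element of `ℕ∞`. -/
def projdim (M : Type u) [AddCommGroup M] [Module R M] : ℕ∞ :=
  sInf {x : ℕ∞ | ∃ n : ℕ, ProjDimLE R n (ModuleCat.of R M) ∧ x = n}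

/-- `injdim_R M ≤ n`: there is an injective resolution of `M` of length `n`. -/
def InjDimLE : ℕ → ModuleCat.{u} R → Prop
  | 0, M => Module.Injective R M
  | n + 1, M => ∃ I : ModuleCat.{u} R, Module.Injective R I ∧
      ∃ f : M →ₗ[R] I, Function.Injective f ∧
        InjDimLE n (ModuleCat.of R (I ⧸ LinearMap.range f))

/-- `R` is Gorenstein: `R` has finite injective dimension as a module over itself. -/
def IsGorensteinRing : Prop := ∃ n : ℕ, InjDimLE R n (ModuleCat.of R R)

/-- `AB-dim_R M = sup { G-dim_R M, P_R(M) }`. -/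
def abdim (M : Type u) [AddCommGroup M] [Module R M] : WithBot ℕ∞ :=
  max ((gdim R M : ℕ∞) : WithBot ℕ∞) (extPsup R M)

/-- The depth of `M`: the length of a maximal `M`-regular sequence contained in the
maximal ideal (expressed as the sup of lengths of such regular sequences). -/
def rdepth [IsLocalRing R] (M : Type u) [AddCommGroup M] [Module R M] : ℕ∞ :=
  sSup {x : ℕ∞ | ∃ rs : List R, (∀ r ∈ rs, r ∈ maximalIdeal R) ∧
    RingTheory.Sequence.IsRegular M rs ∧ x = rs.length}

/-- `S` is a first syzygy `Ω M` of `M`: the kernel of a minimal free cover of `M`. -/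
def IsSyzygyOf [IsLocalRing R] (S M : ModuleCat.{u} R) : Prop :=
  ∃ F : ModuleCat.{u} R, Module.Free R F ∧ Module.Finite R F ∧
    ∃ π : F →ₗ[R] M, Function.Surjective π ∧
      LinearMap.ker π ≤ (maximalIdeal R) • (⊤ : Submodule R F) ∧
      Nonempty (S ≃ₗ[R] LinearMap.ker π)

/-- `S` is an `n`-th syzygy `Ω^n M` of `M`. -/
def IsNthSyzygyOf [IsLocalRing R] : ℕ → ModuleCat.{u} R → ModuleCat.{u} R → Prop
  | 0, S, M => Nonempty (S ≃ₗ[R] M)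
  | n + 1, S, M => ∃ T : ModuleCat.{u} R, IsSyzygyOf R T M ∧ IsNthSyzygyOf n S T

end

/-! ### Vanishing of Ext and short exact sequences -/

noncomputable section

variable (R : Type u) [CommRing R]

/-- In positive degrees, the derived functor `Ext` of the statement vanishes if and only if
`Abelian.Ext`, which carries the long exact sequences, does: on a projective resolution `P` of `M`
both say that each cocycle `P_{n+1} → N` factors through the differential `P_{n+1} → P_n`. -/
lemma extVanishes_succ_iff (M : Type u) [AddCommGroup M] [Module R M]
    (N : Type u) [AddCommGroup N] [Module R N] (n : ℕ) :
    ExtVanishes R M N (n + 1) ↔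
      Subsingleton (Abelian.Ext.{u} (ModuleCat.of R M) (ModuleCat.of R N) (n + 1)) := by
  let P : ProjectiveResolution (ModuleCat.of R M) := projectiveResolution _
  have key : ExtVanishes R M N (n + 1) ↔
      ∀ f : P.complex.X (n + 1) ⟶ ModuleCat.of R N, P.complex.d (n + 2) (n + 1) ≫ f = 0 →
        ∃ g : P.complex.X n ⟶ ModuleCat.of R N, P.complex.d (n + 1) n ≫ g = f := by
    unfold ExtVanishes
    rw [← ModuleCat.isZero_iff_subsingleton, (P.isoExt (n + 1) (ModuleCat.of R N)).isZero_iff,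
      ← HomologicalComplex.exactAt_iff_isZero_homology,
      HomologicalComplex.exactAt_iff' _ n (n + 1) (n + 2) (by simp) (by simp),
      ShortComplex.moduleCat_exact_iff]
    rfl
  rw [key]
  constructor
  · intro h
    refine subsingleton_of_forall_eq 0 fun α ↦ ?_
    obtain ⟨f, hf, rfl⟩ := P.extMk_surjective α (n + 2) rfl
    exact (P.extMk_eq_zero_iff f (n + 2) rfl hf n rfl).2 (h f hf)
  · intro h f hf
    exact (P.extMk_eq_zero_iff f (n + 2) rfl hf n rfl).1 (Subsingleton.elim _ _)

lemma extVanishes_of_projective (P : Type u) [AddCommGroup P] [Module R P] [Module.Projective R P]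
    (N : Type u) [AddCommGroup N] [Module R N] (n : ℕ) : ExtVanishes R P N (n + 1) := by
  have : Projective (ModuleCat.of R P) := IsProjective.iff_projective (R := R) P |>.1 inferInstance
  exact (extVanishes_succ_iff R P N n).2 (Abelian.Ext.subsingleton_of_projective _ _ n)

section

variable {R}
variable {A B C N : Type u} [AddCommGroup A] [Module R A] [AddCommGroup B] [Module R B]
  [AddCommGroup C] [Module R C] [AddCommGroup N] [Module R N]

lemma ExtVanishes.congr (e : A ≃ₗ[R] B) {n : ℕ} (h : ExtVanishes R A N n) :
    ExtVanishes R B N n := by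
  unfold ExtVanishes at h ⊢
  rw [← ModuleCat.isZero_iff_subsingleton] at h ⊢
  exact h.of_iso (((Ext R (ModuleCat.{u} R) n).mapIso e.toModuleIso.op).app (ModuleCat.of R N))

lemma extClass_comp_mk₀_comp {S : ShortComplex (ModuleCat.{u} R)} (hS : S.ShortExact)
    {Y : ModuleCat.{u} R} (ψ : S.X₂ ⟶ Y) :
    hS.extClass.comp (Abelian.Ext.mk₀ (S.f ≫ ψ)) (add_zero 1) = 0 := by
  rw [← Abelian.Ext.mk₀_comp_mk₀]
  exact hS.extClass_comp_assoc _

lemma shortExact_of {f : A →ₗ[R] B} {g : B →ₗ[R] C} (hf : Function.Injective f)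
    (hg : Function.Surjective g) (hfg : LinearMap.range f = LinearMap.ker g) :
    (ShortComplex.moduleCatMk f g (by
      rw [← LinearMap.range_le_ker_iff, hfg])).ShortExact :=
  ModuleCat.shortComplex_shortExact _ (LinearMap.exact_iff.2 hfg.symm) hf hg

variable {f : A →ₗ[R] B} {g : B →ₗ[R] C} (hf : Function.Injective f)
    (hg : Function.Surjective g) (hfg : LinearMap.range f = LinearMap.ker g)

include hf hg hfg

lemma ExtVanishes.mid {n : ℕ} (hA : ExtVanishes R A N (n + 1)) (hC : ExtVanishes R C N (n + 1)) :
    ExtVanishes R B N (n + 1) := by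
  rw [extVanishes_succ_iff] at *
  refine subsingleton_of_forall_eq 0 fun x ↦ ?_
  obtain ⟨y, rfl⟩ := Abelian.Ext.contravariant_sequence_exact₂ (shortExact_of hf hg hfg) _ x
    (hA.elim _ _)
  rw [hC.elim y 0]
  exact Abelian.Ext.comp_zero ..

lemma ExtVanishes.right {n : ℕ} (hA : ExtVanishes R A N (n + 1))
    (hB : ExtVanishes R B N (n + 2)) : ExtVanishes R C N (n + 2) := by
  rw [extVanishes_succ_iff] at *
  refine subsingleton_of_forall_eq 0 fun x ↦ ?_
  obtain ⟨y, rfl⟩ := Abelian.Ext.contravariant_sequence_exact₃ (shortExact_of hf hg hfg) _ x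
    (hB.elim _ _) (n₀ := n + 1) (by omega)
  rw [hA.elim y 0]
  exact Abelian.Ext.comp_zero ..

lemma ExtVanishes.left {n : ℕ} (hB : ExtVanishes R B N (n + 1))
    (hC : ExtVanishes R C N (n + 2)) : ExtVanishes R A N (n + 1) := by
  rw [extVanishes_succ_iff] at *
  refine subsingleton_of_forall_eq 0 fun x ↦ ?_
  obtain ⟨y, rfl⟩ := Abelian.Ext.contravariant_sequence_exact₁ (shortExact_of hf hg hfg) _ x
    (n₁ := n + 2) (by omega) (hC.elim _ _)
  rw [hB.elim y 0]
  exact Abelian.Ext.comp_zero ..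

/-- If `Ext¹(C, N) = 0`, every homomorphism `A → N` extends along `f : A → B`. -/
lemma ExtVanishes.exists_extension (hC : ExtVanishes R C N 1) (φ : A →ₗ[R] N) :
    ∃ ψ : B →ₗ[R] N, ψ ∘ₗ f = φ := by
  rw [extVanishes_succ_iff] at *
  obtain ⟨y, hy⟩ := Abelian.Ext.contravariant_sequence_exact₁ (shortExact_of hf hg hfg) _
    (Abelian.Ext.mk₀ (ModuleCat.ofHom φ)) (n₁ := 1) (by omega) (hC.elim _ _)
  obtain ⟨ψ, rfl⟩ := Abelian.Ext.addEquiv₀.symm.surjective y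
  refine ⟨ψ.hom, ?_⟩
  have h := hy
  rw [Abelian.Ext.addEquiv₀_symm_apply, Abelian.Ext.mk₀_comp_mk₀] at h
  have h2 := (Abelian.Ext.mk₀_bijective _ _).1 h
  exact congrArg ModuleCat.Hom.hom h2

/-- If `Ext¹(B, N) = 0`, then `Ext¹(C, N)` is the cokernel of `Hom(B, N) → Hom(A, N)`, hence
vanishes once every homomorphism `A → N` extends to `B`. -/
lemma ExtVanishes.one_of_extension (hB : ExtVanishes R B N 1)
    (h : ∀ φ : A →ₗ[R] N, ∃ ψ : B →ₗ[R] N, ψ ∘ₗ f = φ) : ExtVanishes R C N 1 := by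
  rw [extVanishes_succ_iff] at *
  refine subsingleton_of_forall_eq 0 fun x ↦ ?_
  obtain ⟨y, rfl⟩ := Abelian.Ext.contravariant_sequence_exact₃ (shortExact_of hf hg hfg) _ x
    (hB.elim _ _) (n₀ := 0) (by omega)
  obtain ⟨φ, rfl⟩ := Abelian.Ext.addEquiv₀.symm.surjective y
  obtain ⟨ψ, hψ⟩ := h φ.hom
  have h2 : φ = (ShortComplex.moduleCatMk f g (by
      rw [← LinearMap.range_le_ker_iff, hfg])).f ≫ ModuleCat.ofHom ψ :=
    ModuleCat.hom_ext hψ.symm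
  rw [h2]
  exact extClass_comp_mk₀_comp (shortExact_of hf hg hfg) (ModuleCat.ofHom ψ)

end

/-! ### Totally reflexive modules, G-dimension and projective dimension -/

section

variable {R}

lemma isTotallyReflexive_of_projective (P : Type u) [AddCommGroup P] [Module R P]
    [Module.Finite R P] [Module.Projective R P] : IsTotallyReflexive R P := by
  refine ⟨Module.bijective_dual_eval R P, fun n hn ↦ ?_, fun n hn ↦ ?_⟩ <;>
  · obtain ⟨n, rfl⟩ := Nat.exists_eq_add_one.2 hn
    exact extVanishes_of_projective R _ _ n

lemma IsTotallyReflexive.congr {A B : Type u} [AddCommGroup A] [Module R A] [AddCommGroup B]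
    [Module R B] (e : A ≃ₗ[R] B) (h : IsTotallyReflexive R A) : IsTotallyReflexive R B := by
  have : Module.IsReflexive R A := ⟨h.1⟩
  have : Module.IsReflexive R B := Module.equiv e
  exact ⟨Module.bijective_dual_eval R B, fun n hn ↦ (h.2.1 n hn).congr e,
    fun n hn ↦ (h.2.2 n hn).congr e.symm.dualMap⟩

/-- The kernel `K` of a surjection from a finitely generated projective module `P` onto a totally
reflexive module `X` is totally reflexive. Since `Ext¹(X, R) = 0`, the dual sequence
`0 → X* → P* → K* → 0` is exact; the long exact sequences of both sequences, compared through
`P ≅ P**` and `X ≅ X**`, give the claim. -/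
lemma IsTotallyReflexive.ker {K P X : Type u} [AddCommGroup K] [Module R K] [AddCommGroup P]
    [Module R P] [AddCommGroup X] [Module R X] [Module.Finite R P] [Module.Projective R P]
    (hX : IsTotallyReflexive R X)
    {f : K →ₗ[R] P} {g : P →ₗ[R] X} (hf : Function.Injective f)
    (hg : Function.Surjective g) (hfg : LinearMap.range f = LinearMap.ker g) :
    IsTotallyReflexive R K := by
  have hP : IsTotallyReflexive R P := isTotallyReflexive_of_projective P
  have hgf (x : K) : g (f x) = 0 :=
    LinearMap.mem_ker.1 (hfg ▸ LinearMap.mem_range_self f x)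
  have ext1 := (hX.2.1 1 one_pos).exists_extension hf hg hfg
  have inj : Function.Injective g.dualMap := LinearMap.dualMap_injective_of_surjective hg
  have surj : Function.Surjective f.dualMap := ext1
  have exact : LinearMap.range g.dualMap = LinearMap.ker f.dualMap := by
    rw [LinearMap.ker_dualMap_eq_dualAnnihilator_range, hfg,
      LinearMap.range_dualMap_eq_dualAnnihilator_ker_of_surjective g hg]
  refine ⟨⟨?_, ?_⟩, ?_, ?_⟩
  · rw [injective_iff_map_eq_zero]
    intro x hx
    apply hf
    apply hP.1.1
    ext ζ
    simpa using LinearMap.congr_fun hx (ζ ∘ₗ f)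
  · intro φ
    -- `φ ∘ f*` is evaluation at some `p : P`, and `g p` is killed by `X*`, so `p` lies in `K`.
    obtain ⟨p, hp⟩ := hP.1.2 (φ ∘ₗ f.dualMap)
    have hp (ζ : Module.Dual R P) : ζ p = φ (ζ ∘ₗ f) := LinearMap.congr_fun hp ζ
    have hgp : g p = 0 := by
      apply hX.1.1
      ext ξ
      have : (ξ ∘ₗ g) ∘ₗ f = 0 := by ext x; simp [hgf]
      simpa [this] using hp (ξ ∘ₗ g)
    obtain ⟨x, rfl⟩ : p ∈ LinearMap.range f := hfg ▸ hgp
    refine ⟨x, ?_⟩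
    ext η
    obtain ⟨ζ, rfl⟩ := surj η
    exact hp ζ
  · intro n hn
    obtain ⟨n, rfl⟩ := Nat.exists_eq_add_one.2 hn
    exact (hP.2.1 _ hn).left hf hg hfg (hX.2.1 _ (by omega))
  · intro n hn
    obtain ⟨n, rfl⟩ := Nat.exists_eq_add_one.2 hn
    cases n with
    | zero =>
      -- A functional on `X*` is evaluation at some `g p`, so evaluation at `p` extends it to `P*`.
      refine (hP.2.2 1 one_pos).one_of_extension inj surj exact fun φ ↦ ?_
      obtain ⟨x, rfl⟩ := hX.1.2 φ
      obtain ⟨p, rfl⟩ := hg x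
      exact ⟨Module.Dual.eval R P p, rfl⟩
    | succ n => exact (hX.2.2 _ (by omega)).right inj surj exact (hP.2.2 _ (by omega))

lemma GdimLE.congr {n : ℕ} {A B : ModuleCat.{u} R} (e : A ≃ₗ[R] B) (h : GdimLE R n A) :
    GdimLE R n B := by
  cases n with
  | zero => exact IsTotallyReflexive.congr e h
  | succ n =>
    obtain ⟨G, hG, hG', f, hf, hn⟩ := h
    refine ⟨G, hG, hG', e.toLinearMap ∘ₗ f, e.surjective.comp hf, ?_⟩
    rwa [LinearEquiv.ker_comp]

lemma ProjDimLE.gdimLE [IsNoetherianRing R] {n : ℕ} {Y : ModuleCat.{u} R} [hY : Module.Finite R Y]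
    (h : ProjDimLE R n Y) : GdimLE R n Y := by
  induction n generalizing Y with
  | zero =>
    have : Module.Projective R Y := h
    exact isTotallyReflexive_of_projective Y
  | succ n ih =>
    obtain ⟨P, hP, hP', f, hf, hn⟩ := h
    exact ⟨P, hP, isTotallyReflexive_of_projective P, f, hf, ih hn⟩

lemma ProjDimLE.extVanishes {n : ℕ} {Y : ModuleCat.{u} R} (h : ProjDimLE R n Y)
    (N : Type u) [AddCommGroup N] [Module R N] {m : ℕ} (hm : n < m) : ExtVanishes R Y N m := by
  obtain ⟨m, rfl⟩ := Nat.exists_eq_add_one.2 (Nat.zero_lt_of_lt hm)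
  induction n generalizing Y m with
  | zero =>
    have : Module.Projective R Y := h
    exact extVanishes_of_projective R Y N m
  | succ n ih =>
    obtain ⟨P, hP, hP', f, hf, hn⟩ := h
    obtain ⟨m, rfl⟩ := Nat.exists_eq_add_one.2 (show 0 < m by omega)
    exact (ih hn m (by omega)).right (LinearMap.ker f).injective_subtype hf
      (Submodule.range_subtype _) (extVanishes_of_projective R P N _)

lemma projdim_lt_top {Y : Type u} [AddCommGroup Y] [Module R Y] :
    projdim R Y < ⊤ ↔ ∃ n, ProjDimLE R n (ModuleCat.of R Y) := by
  simp [projdim, sInf_lt_iff]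

lemma gdim_lt_top {Y : Type u} [AddCommGroup Y] [Module R Y] :
    gdim R Y < ⊤ ↔ ∃ n, GdimLE R n (ModuleCat.of R Y) := by
  simp [gdim, sInf_lt_iff]

/-! ### Finiteness of the AB-dimension -/

/-- `P_R(M) < ∞`: one bound `b` works for all finitely generated `N ∈ M^⊥` at once, in the sense
that `Ext^n(M, N) = 0` for all `n > b`. -/
def ExtBounded (R : Type u) [CommRing R] (M : Type u) [AddCommGroup M] [Module R M] : Prop :=
  ∃ b : ℕ, ∀ (N : Type u) [AddCommGroup N] [Module R N], Module.Finite R N → MemPerp R M N →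
    ∀ n > b, ExtVanishes R M N n

lemma extPsup_lt_top {M : Type u} [AddCommGroup M] [Module R M] :
    extPsup R M < ⊤ ↔ ExtBounded R M := by
  constructor
  · intro h
    obtain ⟨b, hb⟩ : ∃ b : ℕ, extPsup R M ≤ ((b : ℕ∞) : WithBot ℕ∞) := by
      generalize extPsup R M = x at h
      induction x with
      | bot => exact ⟨0, bot_le⟩
      | coe x =>
        induction x with
        | top => exact absurd h (lt_irrefl _)
        | coe x => exact ⟨x, le_rfl⟩
    refine ⟨b, fun N _ _ hN hMN n hn ↦ ?_⟩
    by_contra hc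
    have h1 : ((n : ℕ∞) : WithBot ℕ∞) ≤ extP R M N := le_sSup ⟨n, hc, rfl⟩
    have h2 : extP R M N ≤ extPsup R M := le_sSup ⟨N, _, _, hN, hMN, rfl⟩
    have h3 := (h1.trans h2).trans hb
    norm_cast at h3
    omega
  · rintro ⟨b, hb⟩
    refine lt_of_le_of_lt (b := ((b : ℕ∞) : WithBot ℕ∞)) ?_ ?_
    · refine sSup_le ?_
      rintro _ ⟨N, _, _, hN, hMN, rfl⟩
      refine sSup_le ?_
      rintro _ ⟨n, hn, rfl⟩
      norm_cast
      by_contra hc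
      exact hn (hb N hN hMN n (by omega))
    · exact WithBot.coe_lt_coe.2 (ENat.natCast_lt_top b)

lemma abdim_lt_top {M : Type u} [AddCommGroup M] [Module R M] :
    abdim R M < ⊤ ↔ (∃ n, GdimLE R n (ModuleCat.of R M)) ∧ ExtBounded R M := by
  rw [abdim, max_lt_iff, extPsup_lt_top, ← gdim_lt_top]
  exact and_congr_left' WithBot.coe_lt_coe

/-- If `Ext^{n+i}(A, N)` and `Ext^n(B, N)` vanish simultaneously for all `n > d` and all `N`, then
`A^⊥ = B^⊥`, and a uniform bound for one of the two modules gives one for the other. -/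
lemma ExtBounded.of_shift {A B : Type u} [AddCommGroup A] [Module R A] [AddCommGroup B]
    [Module R B] (i d : ℕ)
    (h : ∀ (N : Type u) [AddCommGroup N] [Module R N], ∀ n > d,
      (ExtVanishes R A N (n + i) ↔ ExtVanishes R B N n)) : ExtBounded R A ↔ ExtBounded R B := by
  constructor
  · rintro ⟨b, hb⟩
    refine ⟨max b d, fun N _ _ hN ⟨c, hc⟩ n hn ↦ ?_⟩
    refine (h N n (by omega)).1 (hb N hN ⟨c + d + i + 1, fun m hm ↦ ?_⟩ _ (by omega))
    obtain ⟨k, rfl⟩ := Nat.exists_eq_add_of_le' (show i ≤ m by omega)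
    exact (h N k (by omega)).2 (hc k (by omega))
  · rintro ⟨b, hb⟩
    refine ⟨max b d + i, fun N _ _ hN ⟨c, hc⟩ m hm ↦ ?_⟩
    obtain ⟨k, rfl⟩ := Nat.exists_eq_add_of_le' (show i ≤ m by omega)
    exact (h N k (by omega)).2 (hb N hN ⟨c + d + 1, fun n hn ↦
      (h N n (by omega)).1 (hc _ (by omega))⟩ k (by omega))

/-! ### The two exact sequences -/

lemma partA (R : Type u) [CommRing R] [IsNoetherianRing R]
    {M Y X : Type u} [AddCommGroup M] [Module R M]
    [AddCommGroup Y] [Module R Y] [AddCommGroup X] [Module R X]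
    [Module.Finite R Y] [hXf : Module.Finite R X] (hY : projdim R Y < ⊤)
    (hX : IsTotallyReflexive R X)
    {f : Y →ₗ[R] X} {g : X →ₗ[R] M} (hf : Function.Injective f) (hg : Function.Surjective g)
    (hfg : LinearMap.range f = LinearMap.ker g) : abdim R M < ⊤ ↔ abdim R X < ⊤ := by
  obtain ⟨d, hd⟩ := projdim_lt_top.1 hY
  have hMg : ∃ n, GdimLE R n (ModuleCat.of R M) :=
    ⟨d + 1, ModuleCat.of R X, hXf, hX, g, hg, hd.gdimLE.congr
      ((LinearEquiv.ofInjective f hf).trans (LinearEquiv.ofEq _ _ hfg))⟩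
  have hXg : ∃ n, GdimLE R n (ModuleCat.of R X) := ⟨0, hX⟩
  rw [abdim_lt_top, abdim_lt_top, and_iff_right hMg, and_iff_right hXg]
  refine ExtBounded.of_shift 0 (d + 1) fun N _ _ n hn ↦ ?_
  obtain ⟨n, rfl⟩ := Nat.exists_eq_add_of_le' (show 2 ≤ n by omega)
  exact ⟨fun h ↦ (hd.extVanishes N (by omega)).mid hf hg hfg h,
    fun h ↦ (hd.extVanishes N (m := n + 1) (by omega)).right hf hg hfg h⟩

/-- If `0 → M → Y → X → 0` is exact with `pd Y ≤ n` and `X` totally reflexive, then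
`G-dim M ≤ n`. For a surjection `P → Y` from a projective with kernel `Z`, the preimage `K` of `M` in `P`
is the kernel of `P → X`, so `K` is totally reflexive and `0 → Z → K → M → 0` is exact. -/
lemma gdimLE_of_partB (R : Type u) [CommRing R] [IsNoetherianRing R]
    {M Y X : Type u} [AddCommGroup M] [Module R M]
    [AddCommGroup Y] [Module R Y] [AddCommGroup X] [Module R X]
    [hYf : Module.Finite R Y] {n : ℕ} (hY : ProjDimLE R n (ModuleCat.of R Y))
    (hX : IsTotallyReflexive R X)
    {f : M →ₗ[R] Y} {g : Y →ₗ[R] X} (hf : Function.Injective f) (hg : Function.Surjective g)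
    (hfg : LinearMap.range f = LinearMap.ker g) : GdimLE R n (ModuleCat.of R M) := by
  cases n with
  | zero =>
    have : Module.Projective R Y := hY
    exact hX.ker hf hg hfg
  | succ n =>
    obtain ⟨P, hP, hP', π, hπ, hn⟩ := hY
    let K := LinearMap.ker (g ∘ₗ π)
    have hK : IsTotallyReflexive R K :=
      hX.ker K.injective_subtype (hg.comp hπ) (Submodule.range_subtype _)
    let e : M ≃ₗ[R] LinearMap.ker g :=
      (LinearEquiv.ofInjective f hf).trans (LinearEquiv.ofEq _ _ hfg)
    let ρ : K →ₗ[R] LinearMap.ker g := π.restrict fun x hx ↦ hx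
    have hρ : Function.Surjective ρ := by
      rintro ⟨y, hy⟩
      obtain ⟨p, rfl⟩ := hπ y
      exact ⟨⟨p, hy⟩, rfl⟩
    have hker (x : P) (hx : x ∈ LinearMap.ker π) : x ∈ K := by
      simp only [LinearMap.mem_ker] at hx
      simp [K, hx]
    let e' : LinearMap.ker π ≃ₗ[R] LinearMap.ker ρ :=
      { toFun := fun x ↦ ⟨⟨x, hker _ x.2⟩, Subtype.ext x.2⟩
        invFun := fun x ↦ ⟨x.1.1, congrArg Subtype.val x.2⟩
        map_add' := fun _ _ ↦ rfl
        map_smul' := fun _ _ ↦ rfl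
        left_inv := fun _ ↦ rfl
        right_inv := fun _ ↦ rfl }
    have h1 : GdimLE R (n + 1) (ModuleCat.of R (LinearMap.ker g)) :=
      ⟨ModuleCat.of R K, inferInstanceAs (Module.Finite R K), hK, ρ, hρ, hn.gdimLE.congr e'⟩
    exact h1.congr e.symm

lemma partB (R : Type u) [CommRing R] [IsNoetherianRing R]
    {M Y X : Type u} [AddCommGroup M] [Module R M]
    [AddCommGroup Y] [Module R Y] [AddCommGroup X] [Module R X]
    [Module.Finite R Y] (hY : projdim R Y < ⊤)
    (hX : IsTotallyReflexive R X)
    {f : M →ₗ[R] Y} {g : Y →ₗ[R] X} (hf : Function.Injective f) (hg : Function.Surjective g)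
    (hfg : LinearMap.range f = LinearMap.ker g) : abdim R M < ⊤ ↔ abdim R X < ⊤ := by
  obtain ⟨d, hd⟩ := projdim_lt_top.1 hY
  have hMg : ∃ n, GdimLE R n (ModuleCat.of R M) := ⟨d, gdimLE_of_partB R hd hX hf hg hfg⟩
  have hXg : ∃ n, GdimLE R n (ModuleCat.of R X) := ⟨0, hX⟩
  rw [abdim_lt_top, abdim_lt_top, and_iff_right hMg, and_iff_right hXg]
  refine (ExtBounded.of_shift 1 d fun N _ _ n hn ↦ ?_).symm
  obtain ⟨n, rfl⟩ := Nat.exists_eq_add_one.2 (Nat.zero_lt_of_lt hn)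
  exact ⟨fun h ↦ (hd.extVanishes N (by omega)).left hf hg hfg h,
    fun h ↦ h.right hf hg hfg (hd.extVanishes N (m := n + 2) (by omega))⟩

end

end


/-- (a) For an exact sequence `0 → Y → X → M → 0` with `pd_R Y < ∞` and `X` totally
reflexive, `AB-dim_R M < ∞ ↔ AB-dim_R X < ∞`; (b) for an exact sequence
`0 → M → Y' → X' → 0` with `pd_R Y' < ∞` and `X'` totally reflexive,
`AB-dim_R M < ∞ ↔ AB-dim_R X' < ∞`. -/
theorem statement4 (R : Type u) [CommRing R] [IsLocalRing R] [IsNoetherianRing R]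
    (M : Type u) [AddCommGroup M] [Module R M] [Module.Finite R M] :
    (∀ (Y X : Type u) [AddCommGroup Y] [Module R Y] [AddCommGroup X] [Module R X],
      Module.Finite R Y → Module.Finite R X →
      projdim R Y < ⊤ → IsTotallyReflexive R X →
      ∀ (f : Y →ₗ[R] X) (g : X →ₗ[R] M), Function.Injective f → Function.Surjective g →
        LinearMap.range f = LinearMap.ker g →
        (abdim R M < ⊤ ↔ abdim R X < ⊤)) ∧
    (∀ (Y' X' : Type u) [AddCommGroup Y'] [Module R Y'] [AddCommGroup X'] [Module R X'],
      Module.Finite R Y' → Module.Finite R X' →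
      projdim R Y' < ⊤ → IsTotallyReflexive R X' →
      ∀ (f : M →ₗ[R] Y') (g : Y' →ₗ[R] X'), Function.Injective f → Function.Surjective g →
        LinearMap.range f = LinearMap.ker g →
        (abdim R M < ⊤ ↔ abdim R X' < ⊤)) := by
  exact ⟨fun Y X _ _ _ _ _ _ hY hX f g hf hg hfg ↦ partA R hY hX hf hg hfg,
    fun Y X _ _ _ _ _ _ hY hX f g hf hg hfg ↦ partB R hY hX hf hg hfg⟩
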